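/- Let k = 2d with d ≥ 1. For every π ∈ S_k with ν(π) > 2, there exists τ ∈ S_k with 0 < d_{G_k}(π, τ) ≤ ν(π) − ν(τ). -/

import Mathlib

/-- `π` and `τ` are related by a prefix reversal: there is `t ≤ k` such that the first `t`
entries are reversed and the remaining entries agree (0-indexed form of the paper's
1-indexed definition). -/
def PrefixRev (k : ℕ) (π τ : Equiv.Perm (Fin k)) : Prop :=
  ∃ t : ℕ, ∃ ht : t ≤ k,
    (∀ i : Fin k, t ≤ (i : ℕ) → π i = τ i) ∧
    (∀ i : Fin k, ∀ hi : (i : ℕ) < t, π i = τ ⟨t - 1 - (i : ℕ), by omega⟩)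

/-- `π` and `τ` are related by a suffix reversal: there is `t` such that the entries at
positions `< t` agree and the remaining entries are reversed. -/
def SuffixRev (k : ℕ) (π τ : Equiv.Perm (Fin k)) : Prop :=
  ∃ t : ℕ,
    (∀ i : Fin k, (i : ℕ) < t → π i = τ i) ∧
    (∀ i : Fin k, ∀ hi : t ≤ (i : ℕ), π i = τ ⟨k - 1 - (i : ℕ) + t, by
      have := i.isLt; omega⟩)

/-- The pancake graph `P_k`, whose edges are prefix reversals. -/
def pancakeGraph (k : ℕ) : SimpleGraph (Equiv.Perm (Fin k)) :=
  SimpleGraph.fromRel (PrefixRev k)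

/-- The graph `G_k`, whose edges are prefix and suffix reversals. -/
def prefixSuffixGraph (k : ℕ) : SimpleGraph (Equiv.Perm (Fin k)) :=
  SimpleGraph.fromRel (fun π τ => PrefixRev k π τ ∨ SuffixRev k π τ)

/-- The values of `π` at positions `p` and `q` differ by `1`, or are `{1, k}`
(1-indexed), i.e. `{0, k - 1}` in this 0-indexed formalization. -/
def PiAdjacency (k : ℕ) (π : Equiv.Perm (Fin k)) (p q : Fin k) : Prop :=
  (((π p : ℕ) : ℤ) - ((π q : ℕ) : ℤ)).natAbs = 1 ∨
    ({(π p : ℕ), (π q : ℕ)} : Set ℕ) = {0, k - 1}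

/-- Positions `i` and `i + 1` (0-indexed) form a `π`-adjacency. -/
def PosAdjacency (k : ℕ) (π : Equiv.Perm (Fin k)) (i : ℕ) : Prop :=
  ∃ h : i + 1 < k, PiAdjacency k π ⟨i, by omega⟩ ⟨i + 1, h⟩

/-- The equivalence relation `∼_π`: `a ∼_π b` iff every pair of consecutive positions
between the position of `a` and the position of `b` is a `π`-adjacency. -/
def Sim (k : ℕ) (π : Equiv.Perm (Fin k)) (a b : Fin k) : Prop :=
  ∀ i : ℕ, min ((π.symm a : ℕ)) ((π.symm b : ℕ)) ≤ i →
    i < max ((π.symm a : ℕ)) ((π.symm b : ℕ)) → PosAdjacency k π i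

/-- `∼_π` has exactly one equivalence class on `[k]`. -/
def OneClass (k : ℕ) (π : Equiv.Perm (Fin k)) : Prop :=
  ∀ a b : Fin k, Sim k π a b

/-- The pairing `φ(j) = j + o_j`, swapping `2i - 1 ↔ 2i` (1-indexed),
i.e. `2i ↔ 2i + 1` (0-indexed). -/
def partner (d : ℕ) (j : Fin (2 * d)) : Fin (2 * d) :=
  ⟨if (j : ℕ) % 2 = 0 then (j : ℕ) + 1 else (j : ℕ) - 1, by
    have := j.isLt; split <;> omega⟩

/-- The equivalence relation `≈_π`. -/
def ApproxSim (d : ℕ) (π : Equiv.Perm (Fin (2 * d))) (a b : Fin (2 * d)) : Prop :=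
  a = b ∨ (Sim (2 * d) π a b ∧ Sim (2 * d) π a (partner d a) ∧
    Sim (2 * d) π b (partner d b))

/-- `j` is free, i.e. `{j}` is an equivalence class (a singleton) of `≈_π`. -/
def IsFree (d : ℕ) (π : Equiv.Perm (Fin (2 * d))) (j : Fin (2 * d)) : Prop :=
  ∀ j' : Fin (2 * d), ApproxSim d π j j' → j' = j

/-- The `≈_π`-equivalence class of `j`, as a finite set. -/
noncomputable def classOf (d : ℕ) (π : Equiv.Perm (Fin (2 * d))) (j : Fin (2 * d)) :
    Finset (Fin (2 * d)) :=
  @Finset.filter _ (fun j' => ApproxSim d π j j') (Classical.decPred _) Finset.univ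

/-- `S(π)`, the number of singletons of `π`. -/
noncomputable def numSingletons (d : ℕ) (π : Equiv.Perm (Fin (2 * d))) : ℕ :=
  (@Finset.filter _ (fun j => IsFree d π j) (Classical.decPred _) Finset.univ).card

/-- `B(π)`, the number of blocks (equivalence classes of `≈_π` of size `> 1`) of `π`. -/
noncomputable def numBlocks (d : ℕ) (π : Equiv.Perm (Fin (2 * d))) : ℕ :=
  ((Finset.univ.image (classOf d π)).filter (fun C => 1 < C.card)).card

/-- The potential function `ν(π) = (3/2) S(π) + 2 B(π)`. -/
noncomputable def nu (d : ℕ) (π : Equiv.Perm (Fin (2 * d))) : ℚ :=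
  3 / 2 * (numSingletons d π : ℚ) + 2 * (numBlocks d π : ℚ)

/-- The unique element of `[k]` congruent to `j - o_j` modulo `k` (0-indexed form). -/
def prevVal (d : ℕ) (j : Fin (2 * d)) : Fin (2 * d) :=
  ⟨if (j : ℕ) % 2 = 0 then ((j : ℕ) + 2 * d - 1) % (2 * d) else ((j : ℕ) + 1) % (2 * d), by
    have := j.isLt; split <;> exact Nat.mod_lt _ (by omega)⟩

section helpers

def ppos {k : ℕ} (π : Equiv.Perm (Fin k)) (a : Fin k) : ℕ := (π.symm a : ℕ)

def PAdj {k : ℕ} (π : Equiv.Perm (Fin k)) (u v : Fin k) : Prop :=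
  ppos π u + 1 = ppos π v ∨ ppos π v + 1 = ppos π u

theorem PAdj.symm' {k : ℕ} {π : Equiv.Perm (Fin k)} {u v : Fin k} (h : PAdj π u v) :
    PAdj π v u := by
  unfold PAdj at *; omega

theorem ppos_lt {k : ℕ} (π : Equiv.Perm (Fin k)) (a : Fin k) : ppos π a < k := (π.symm a).isLt

theorem ppos_inj {k : ℕ} {π : Equiv.Perm (Fin k)} {a b : Fin k} (h : ppos π a = ppos π b) :
    a = b := π.symm.injective (Fin.ext h)

theorem ppos_surj {k : ℕ} (π : Equiv.Perm (Fin k)) {i : ℕ} (h : i < k) :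
    ∃ a, ppos π a = i := ⟨π ⟨i, h⟩, by simp [ppos]⟩

theorem perm_of_ppos {k : ℕ} (π : Equiv.Perm (Fin k)) {i : ℕ} (h : i < k) {a : Fin k}
    (ha : ppos π a = i) : π ⟨i, h⟩ = a := by
  subst ha; simp [ppos]

theorem exists_prefix {k : ℕ} (π : Equiv.Perm (Fin k)) (t : ℕ) (ht : t ≤ k) :
    ∃ τ : Equiv.Perm (Fin k), PrefixRev k π τ ∧
      ∀ u, ppos τ u = if ppos π u < t then t - 1 - ppos π u else ppos π u := by
  let f : Fin k → Fin k := fun i => ⟨if (i : ℕ) < t then t - 1 - (i : ℕ) else i, by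
    have := i.isLt; split <;> omega⟩
  have hf : Function.Involutive f := by
    intro i; apply Fin.ext; simp only [f]; split_ifs <;> omega
  refine ⟨(Function.Involutive.toPerm f hf).trans π, ⟨t, ht, ?_, ?_⟩, ?_⟩
  · intro i hi
    have : f i = i := by apply Fin.ext; simp only [f]; split_ifs <;> omega
    simp [this]
  · intro i hi
    have : f ⟨t - 1 - (i : ℕ), by omega⟩ = i := by
      apply Fin.ext; simp only [f]; split_ifs <;> omega
    simp [this]
  · intro u
    rfl

theorem exists_suffix {k : ℕ} (π : Equiv.Perm (Fin k)) (t : ℕ) (ht : t ≤ k) :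
    ∃ τ : Equiv.Perm (Fin k), SuffixRev k π τ ∧
      ∀ u, ppos τ u = if ppos π u < t then ppos π u else k - 1 - ppos π u + t := by
  let f : Fin k → Fin k := fun i => ⟨if (i : ℕ) < t then i else k - 1 - (i : ℕ) + t, by
    have := i.isLt; split <;> omega⟩
  have hf : Function.Involutive f := by
    intro i; apply Fin.ext; simp only [f]; split_ifs <;> omega
  refine ⟨(Function.Involutive.toPerm f hf).trans π, ⟨t, ?_, ?_⟩, ?_⟩
  · intro i hi
    have : f i = i := by apply Fin.ext; simp only [f]; split_ifs <;> omega
    simp [this]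
  · intro i hi
    have : f ⟨k - 1 - (i : ℕ) + t, by have := i.isLt; omega⟩ = i := by
      apply Fin.ext; simp only [f]; split_ifs <;> omega
    simp [this]
  · intro u
    rfl

theorem walk_of_step {k : ℕ} {π τ : Equiv.Perm (Fin k)} (h : PrefixRev k π τ ∨ SuffixRev k π τ) :
    ∃ w : (prefixSuffixGraph k).Walk π τ, w.length ≤ 1 := by
  by_cases e : π = τ
  · subst e; exact ⟨.nil, by simp⟩
  · have : (prefixSuffixGraph k).Adj π τ := by
      rw [prefixSuffixGraph, SimpleGraph.fromRel_adj]
      exact ⟨e, Or.inl h⟩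
    exact ⟨this.toWalk, by simp⟩

theorem prevVal_val (d : ℕ) (j : Fin (2 * d)) : (prevVal d j : ℕ) =
    if (j : ℕ) % 2 = 0 then (if (j : ℕ) = 0 then 2 * d - 1 else j - 1)
    else (if (j : ℕ) + 1 = 2 * d then 0 else j + 1) := by
  have hj := j.isLt
  simp only [prevVal]
  split_ifs with h1 h2 h3
  · rw [h2, Nat.mod_eq_of_lt] <;> omega
  · rw [show (j : ℕ) + 2 * d - 1 = (j - 1) + 2 * d by omega, Nat.add_mod_right,
      Nat.mod_eq_of_lt]; omega
  · rw [h3, Nat.mod_self]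
  · rw [Nat.mod_eq_of_lt]; omega

theorem partner_val (d : ℕ) (j : Fin (2 * d)) : (partner d j : ℕ) =
    if (j : ℕ) % 2 = 0 then (j : ℕ) + 1 else (j : ℕ) - 1 := rfl

theorem partner_partner (d : ℕ) (j : Fin (2 * d)) : partner d (partner d j) = j := by
  have := j.isLt
  apply Fin.ext; simp only [partner_val]; split_ifs <;> omega

theorem prev_prev (d : ℕ) (j : Fin (2 * d)) : prevVal d (prevVal d j) = j := by
  have := j.isLt
  apply Fin.ext
  have h1 := prevVal_val d j
  have h2 := prevVal_val d (prevVal d j)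
  split_ifs at h1 h2 <;> omega

theorem partner_ne (d : ℕ) (j : Fin (2 * d)) : partner d j ≠ j := by
  intro h; have := congrArg Fin.val h; rw [partner_val] at this; split_ifs at this <;> omega

theorem partner_ne_prev {d : ℕ} (hd : 2 ≤ d) (j : Fin (2 * d)) : partner d j ≠ prevVal d j := by
  have := j.isLt
  intro h; have := congrArg Fin.val h; rw [partner_val, prevVal_val] at this
  split_ifs at this <;> omega

theorem prev_ne (d : ℕ) (j : Fin (2 * d)) : prevVal d j ≠ j := by
  have := j.isLt
  intro h; have := congrArg Fin.val h; rw [prevVal_val] at this; split_ifs at this <;> omega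

def Cyc (d : ℕ) (u v : Fin (2 * d)) : Prop := v = partner d u ∨ v = prevVal d u

theorem Cyc.symm' {d : ℕ} {u v : Fin (2 * d)} (h : Cyc d u v) : Cyc d v u := by
  rcases h with rfl | rfl
  · left; rw [partner_partner]
  · right; rw [prev_prev]

theorem piAdj_iff {d : ℕ} (π : Equiv.Perm (Fin (2 * d))) (p q : Fin (2 * d)) :
    PiAdjacency (2 * d) π p q ↔ Cyc d (π p) (π q) := by
  unfold PiAdjacency Cyc
  generalize π p = u
  generalize π q = v
  have := u.isLt
  have := v.isLt
  rw [Set.pair_eq_pair_iff, Fin.ext_iff, Fin.ext_iff, partner_val, prevVal_val]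
  split_ifs <;> omega

theorem posAdj_iff {d : ℕ} {π : Equiv.Perm (Fin (2 * d))} {u v : Fin (2 * d)}
    (h : ppos π u + 1 = ppos π v) : PosAdjacency (2 * d) π (ppos π u) ↔ Cyc d u v := by
  have := ppos_lt π v
  unfold PosAdjacency
  constructor
  · rintro ⟨h1, h2⟩
    rw [piAdj_iff, perm_of_ppos π _ rfl, perm_of_ppos π _ h.symm] at h2
    exact h2
  · intro h2
    refine ⟨by omega, ?_⟩
    rw [piAdj_iff, perm_of_ppos π _ rfl, perm_of_ppos π _ h.symm]
    exact h2

theorem sim_of_adj {d : ℕ} {π : Equiv.Perm (Fin (2 * d))} {u v : Fin (2 * d)}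
    (h : PAdj π u v) (hc : Cyc d u v) : Sim (2 * d) π u v := by
  intro i h1 h2
  change min (ppos π u) (ppos π v) ≤ i at h1
  change i < max (ppos π u) (ppos π v) at h2
  rcases h with h | h
  · have : i = ppos π u := by omega
    rw [this, posAdj_iff h]; exact hc
  · have : i = ppos π v := by omega
    rw [this, posAdj_iff h]; exact hc.symm'

theorem sim_symm {k : ℕ} {π : Equiv.Perm (Fin k)} {u v : Fin k}
    (h : Sim k π u v) : Sim k π v u := by
  intro i h1 h2
  exact h i (by omega) (by omega)

theorem sim_trans {k : ℕ} {π : Equiv.Perm (Fin k)} {u v w : Fin k}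
    (h : Sim k π u v) (h' : Sim k π v w) : Sim k π u w := by
  intro i h1 h2
  by_cases c : min ((π.symm u : ℕ)) ((π.symm v : ℕ)) ≤ i ∧
    i < max ((π.symm u : ℕ)) ((π.symm v : ℕ))
  · exact h i c.1 c.2
  · exact h' i (by omega) (by omega)

theorem cyc_zmod {d : ℕ} {u v : Fin (2 * d)} (h : Cyc d u v) :
    ((v : ℕ) : ZMod (2 * d)) = ((u : ℕ) : ZMod (2 * d)) + 1 ∨
    ((v : ℕ) : ZMod (2 * d)) = ((u : ℕ) : ZMod (2 * d)) - 1 := by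
  have hu := u.isLt
  have hv := v.isLt
  have key : (v : ℕ) = u + 1 ∨ (v : ℕ) + 1 = u ∨ ((v : ℕ) = 0 ∧ (u : ℕ) + 1 = 2 * d) ∨
      ((u : ℕ) = 0 ∧ (v : ℕ) + 1 = 2 * d) := by
    rcases h with h | h
    · have := congrArg Fin.val h; rw [partner_val] at this; split_ifs at this <;> omega
    · have := congrArg Fin.val h; rw [prevVal_val] at this; split_ifs at this <;> omega
  rcases key with h | h | ⟨h1, h2⟩ | ⟨h1, h2⟩
  · left; rw [h]; push_cast; ring
  · right; rw [← h]; push_cast; ring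
  · left
    have : (((u : ℕ) + 1 : ℕ) : ZMod (2 * d)) = 0 := by rw [h2]; exact ZMod.natCast_self _
    push_cast at this
    rw [h1, this]; simp
  · right
    have : (((v : ℕ) + 1 : ℕ) : ZMod (2 * d)) = 0 := by rw [h2]; exact ZMod.natCast_self _
    push_cast at this
    rw [h1]; push_cast; linear_combination this

theorem zmod_inj {d : ℕ} {u v : Fin (2 * d)}
    (h : ((u : ℕ) : ZMod (2 * d)) = ((v : ℕ) : ZMod (2 * d))) : u = v := by
  rw [ZMod.natCast_eq_natCast_iff'] at h
  rw [Nat.mod_eq_of_lt u.isLt, Nat.mod_eq_of_lt v.isLt] at h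
  exact Fin.ext h

theorem run_lemma {d : ℕ} {π : Equiv.Perm (Fin (2 * d))} (x y : ℕ) (hy : y < 2 * d)
    (h : ∀ i, x ≤ i → i < y → PosAdjacency (2 * d) π i) (u : Fin (2 * d)) (hu : ppos π u = x)
    (hxy : x < y) :
    ∃ ε : ZMod (2 * d), (ε = 1 ∨ ε = -1) ∧ ∀ n, x + n ≤ y → ∀ c, ppos π c = x + n →
      ((c : ℕ) : ZMod (2 * d)) = ((u : ℕ) : ZMod (2 * d)) + ε * n := by
  have step : ∀ a b, x ≤ ppos π a → ppos π b ≤ y → ppos π a + 1 = ppos π b → Cyc d a b := by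
    intro a b h1 h2 h3
    exact (posAdj_iff h3).1 (h _ h1 (by omega))
  obtain ⟨v, hv⟩ := ppos_surj π (show x + 1 < 2 * d by omega)
  have huv := cyc_zmod (step u v (by omega) (by omega) (by omega))
  obtain ⟨ε, hε, hv'⟩ : ∃ ε : ZMod (2 * d), (ε = 1 ∨ ε = -1) ∧
      ((v : ℕ) : ZMod (2 * d)) = ((u : ℕ) : ZMod (2 * d)) + ε := by
    rcases huv with h | h
    · exact ⟨1, Or.inl rfl, h⟩
    · exact ⟨-1, Or.inr rfl, by rw [h]; ring⟩
  refine ⟨ε, hε, ?_⟩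
  intro n
  induction n using Nat.strong_induction_on with
  | _ n ih =>
    intro hn c hc
    match n, ih, hn, hc with
    | 0, _, hn, hc =>
      have : c = u := ppos_inj (π := π) (by omega)
      rw [this]; simp
    | 1, _, hn, hc =>
      have : c = v := ppos_inj (π := π) (by omega)
      rw [this, hv']; simp
    | n + 2, ih, hn, hc =>
      obtain ⟨c0, hc0⟩ := ppos_surj π (show x + n < 2 * d by omega)
      obtain ⟨c1, hc1⟩ := ppos_surj π (show x + (n + 1) < 2 * d by omega)
      have e0 := ih n (by omega) (by omega) c0 hc0
      have e1 := ih (n + 1) (by omega) (by omega) c1 hc1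
      have e2 := cyc_zmod (step c1 c (by omega) (by omega) (by omega))
      have hne : ((c : ℕ) : ZMod (2 * d)) ≠ ((c0 : ℕ) : ZMod (2 * d)) := by
        intro e
        have := zmod_inj e
        rw [this] at hc; omega
      push_cast at *
      rcases hε with rfl | rfl <;> rcases e2 with e2 | e2
      · rw [e2, e1]; ring
      · exact absurd (by rw [e2, e1, e0]; ring) hne
      · exact absurd (by rw [e2, e1, e0]; ring) hne
      · rw [e2, e1]; ring

theorem adj_or_one_aux {d : ℕ} {π : Equiv.Perm (Fin (2 * d))} {a b : Fin (2 * d)}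
    (hs : Sim (2 * d) π a b) (hc : Cyc d a b) (hlt : ppos π a < ppos π b) :
    PAdj π a b ∨ OneClass (2 * d) π := by
  have hb := ppos_lt π b
  have hadj : ∀ i, ppos π a ≤ i → i < ppos π b → PosAdjacency (2 * d) π i := by
    intro i h1 h2
    exact hs i (le_trans (min_le_left _ _) h1) (lt_of_lt_of_le h2 (le_max_right _ _))
  obtain ⟨ε, hε, H⟩ := run_lemma _ _ hb hadj a rfl hlt
  obtain ⟨n, hn⟩ : ∃ n, ppos π b = ppos π a + n := ⟨ppos π b - ppos π a, by omega⟩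
  have e := H n (by omega) b hn
  have e' := cyc_zmod hc
  have key : (n : ZMod (2 * d)) = 1 ∨ (n : ZMod (2 * d)) = -1 := by
    rcases hε with rfl | rfl <;> rcases e' with e' | e' <;> rw [e'] at e
    · left; linear_combination -e
    · right; linear_combination -e
    · right; linear_combination e
    · left; linear_combination e
  rcases key with k1 | k1
  · left; left
    have : ((n : ℕ) : ZMod (2 * d)) = ((1 : ℕ) : ZMod (2 * d)) := by simpa using k1
    rw [ZMod.natCast_eq_natCast_iff', Nat.mod_eq_of_lt (by omega), Nat.mod_eq_of_lt (by omega)]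
      at this
    omega
  · right
    have : ((n + 1 : ℕ) : ZMod (2 * d)) = 0 := by push_cast; rw [k1]; ring
    rw [ZMod.natCast_eq_zero_iff] at this
    have := Nat.le_of_dvd (by omega) this
    intro u v i h1 h2
    have := (π.symm u).isLt
    have := (π.symm v).isLt
    exact hadj i (by omega) (by omega)

theorem adj_or_one {d : ℕ} {π : Equiv.Perm (Fin (2 * d))} {a b : Fin (2 * d)}
    (hs : Sim (2 * d) π a b) (hc : Cyc d a b) :
    PAdj π a b ∨ OneClass (2 * d) π := by
  have hne : a ≠ b := by
    rcases hc with rfl | rfl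
    · exact (partner_ne d a).symm
    · exact (prev_ne d a).symm
  rcases lt_trichotomy (ppos π a) (ppos π b) with h | h | h
  · exact adj_or_one_aux hs hc h
  · exact absurd (ppos_inj h) hne
  · rcases adj_or_one_aux (sim_symm hs) hc.symm' h with h | h
    · exact Or.inl h.symm'
    · exact Or.inr h

end helpers

section counting

open Classical in
noncomputable def PV (d : ℕ) (π : Equiv.Perm (Fin (2 * d))) : Finset (Fin (2 * d)) :=
  Finset.univ.filter (fun j => PAdj π j (partner d j))

open Classical in
noncomputable def QV (d : ℕ) (π : Equiv.Perm (Fin (2 * d))) : Finset (Fin (2 * d)) :=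
  Finset.univ.filter (fun j => PAdj π j (prevVal d j) ∧ PAdj π j (partner d j) ∧
    PAdj π (prevVal d j) (partner d (prevVal d j)))

theorem mem_PV {d : ℕ} {π : Equiv.Perm (Fin (2 * d))} {j : Fin (2 * d)} :
    j ∈ PV d π ↔ PAdj π j (partner d j) := by simp [PV]

theorem mem_QV {d : ℕ} {π : Equiv.Perm (Fin (2 * d))} {j : Fin (2 * d)} :
    j ∈ QV d π ↔ PAdj π j (prevVal d j) ∧ j ∈ PV d π ∧ prevVal d j ∈ PV d π := by
  simp [PV, QV]

theorem partner_mem_PV {d : ℕ} {π : Equiv.Perm (Fin (2 * d))} {j : Fin (2 * d)} :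
    partner d j ∈ PV d π ↔ j ∈ PV d π := by
  rw [mem_PV, mem_PV, partner_partner]
  exact ⟨PAdj.symm', PAdj.symm'⟩

theorem prev_mem_QV {d : ℕ} {π : Equiv.Perm (Fin (2 * d))} {j : Fin (2 * d)} :
    prevVal d j ∈ QV d π ↔ j ∈ QV d π := by
  rw [mem_QV, mem_QV, prev_prev]
  exact ⟨fun ⟨a, b, c⟩ => ⟨a.symm', c, b⟩, fun ⟨a, b, c⟩ => ⟨a.symm', c, b⟩⟩

theorem nu_le_two_of_one {d : ℕ} {π : Equiv.Perm (Fin (2 * d))} (h : OneClass (2 * d) π) :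
    nu d π ≤ 2 := by
  have hS : numSingletons d π = 0 := by
    unfold numSingletons
    rw [Finset.card_eq_zero]
    apply Finset.eq_empty_of_forall_notMem
    intro j hj
    replace hj := (@Finset.mem_filter _ _ (Classical.decPred _) _ _).1 hj |>.2
    exact partner_ne d j (hj (partner d j) (Or.inr ⟨h _ _, h _ _, h _ _⟩))
  have hB : numBlocks d π ≤ 1 := by
    unfold numBlocks
    refine (Finset.card_filter_le _ _).trans ?_
    rw [Finset.card_le_one]
    intro A hA B hB
    rw [Finset.mem_image] at hA hB
    obtain ⟨a, _, rfl⟩ := hA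
    obtain ⟨b, _, rfl⟩ := hB
    have : ∀ c, classOf d π c = Finset.univ := by
      intro c
      apply Finset.eq_univ_of_forall
      intro x
      unfold classOf
      refine (@Finset.mem_filter _ _ (Classical.decPred _) _ _).2 ⟨Finset.mem_univ _, ?_⟩
      exact Or.inr ⟨h _ _, h _ _, h _ _⟩
    rw [this, this]
  unfold nu
  rw [hS]
  have : (numBlocks d π : ℚ) ≤ 1 := by exact_mod_cast hB
  norm_num
  linarith

noncomputable def nu' (d : ℕ) (π : Equiv.Perm (Fin (2 * d))) : ℚ :=
  3 * d - ((PV d π).card : ℚ) / 2 - ((QV d π).card : ℚ)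

theorem two_le_nu' {d : ℕ} (hd : 2 ≤ d) (π : Equiv.Perm (Fin (2 * d))) : 2 ≤ nu' d π := by
  have hP : (PV d π).card ≤ 2 * d := by
    simpa using Finset.card_le_univ (PV d π)
  obtain ⟨a, ha⟩ := ppos_surj π (show 0 < 2 * d by omega)
  obtain ⟨b, hb⟩ := ppos_surj π (show 2 * d - 1 < 2 * d by omega)
  have hab : a ≠ b := by rintro rfl; omega
  have key : ∀ j, j ∈ QV d π → j ≠ a ∧ j ≠ b := by
    intro j hj
    rw [mem_QV, mem_PV] at hj
    obtain ⟨h1, h2, -⟩ := hj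
    have hne : ppos π (partner d j) ≠ ppos π (prevVal d j) :=
      fun h => partner_ne_prev hd j (ppos_inj h)
    have := ppos_lt π (partner d j)
    have := ppos_lt π (prevVal d j)
    unfold PAdj at h1 h2
    constructor <;> rintro rfl <;> omega
  have hQ : (QV d π).card + 2 ≤ 2 * d := by
    have hsub : QV d π ⊆ Finset.univ \ {a, b} := by
      intro j hj
      have := key j hj
      simp [this]
    have h1 := Finset.card_le_card hsub
    have h2 : (Finset.univ \ {a, b} : Finset (Fin (2 * d))).card = 2 * d - 2 := by
      rw [Finset.card_sdiff_of_subset (Finset.subset_univ _), Finset.card_pair hab]; simp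
    omega
  have hP' : ((PV d π).card : ℚ) ≤ 2 * d := by exact_mod_cast hP
  have hQ' : ((QV d π).card : ℚ) + 2 ≤ 2 * d := by exact_mod_cast hQ
  unfold nu'
  linarith

theorem approx_iff {d : ℕ} {π : Equiv.Perm (Fin (2 * d))} (h1 : ¬ OneClass (2 * d) π)
    (a b : Fin (2 * d)) :
    ApproxSim d π a b ↔ a = b ∨ (Sim (2 * d) π a b ∧ a ∈ PV d π ∧ b ∈ PV d π) := by
  have : ∀ j, Sim (2 * d) π j (partner d j) ↔ j ∈ PV d π := by
    intro j
    rw [mem_PV]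
    constructor
    · intro h
      exact (adj_or_one h (Or.inl rfl)).resolve_right h1
    · intro h
      exact sim_of_adj h (Or.inl rfl)
  unfold ApproxSim
  rw [this, this]

theorem free_iff {d : ℕ} {π : Equiv.Perm (Fin (2 * d))} (h1 : ¬ OneClass (2 * d) π)
    (j : Fin (2 * d)) : IsFree d π j ↔ j ∉ PV d π := by
  unfold IsFree
  constructor
  · intro h hj
    refine partner_ne d j (h _ ((approx_iff h1 _ _).2 (Or.inr ⟨?_, hj, partner_mem_PV.2 hj⟩)))
    exact sim_of_adj (mem_PV.1 hj) (Or.inl rfl)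
  · intro h j' hj'
    rcases (approx_iff h1 _ _).1 hj' with e | e
    · exact e.symm
    · exact absurd e.2.1 h

open Classical in
theorem numSingletons_eq {d : ℕ} {π : Equiv.Perm (Fin (2 * d))} (h1 : ¬ OneClass (2 * d) π) :
    numSingletons d π + (PV d π).card = 2 * d := by
  unfold numSingletons
  have : (@Finset.filter _ (fun j => IsFree d π j) (Classical.decPred _) Finset.univ)
      = (PV d π)ᶜ := by
    ext j
    simp [free_iff h1]
  rw [this, Finset.card_compl]
  have := Finset.card_le_univ (PV d π)
  simp at *
  omega

open Classical in
noncomputable def PR (d : ℕ) (π : Equiv.Perm (Fin (2 * d))) : Finset (Fin (2 * d)) :=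
  (PV d π).filter (fun j => ppos π j + 1 = ppos π (partner d j))

open Classical in
noncomputable def QR (d : ℕ) (π : Equiv.Perm (Fin (2 * d))) : Finset (Fin (2 * d)) :=
  (QV d π).filter (fun j => ppos π (prevVal d j) + 1 = ppos π j)

open Classical in
theorem card_PV (d : ℕ) (π : Equiv.Perm (Fin (2 * d))) :
    (PV d π).card = 2 * (PR d π).card := by
  have h := Finset.card_filter_add_card_filter_not (s := PV d π)
    (fun j => ppos π j + 1 = ppos π (partner d j))
  have h2 : ((PV d π).filter (fun j => ¬ (ppos π j + 1 = ppos π (partner d j)))).card =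
      (PR d π).card := by
    apply Finset.card_bij (fun j _ => partner d j)
    · intro j hj
      rw [Finset.mem_filter] at hj
      rw [PR, Finset.mem_filter, partner_mem_PV, partner_partner]
      refine ⟨hj.1, ?_⟩
      exact (mem_PV.1 hj.1).resolve_left hj.2
    · intro a _ b _ e
      have := congrArg (partner d) e
      rwa [partner_partner, partner_partner] at this
    · intro b hb
      rw [PR, Finset.mem_filter] at hb
      refine ⟨partner d b, ?_, partner_partner d b⟩
      rw [Finset.mem_filter, partner_mem_PV, partner_partner]
      exact ⟨hb.1, by omega⟩
  have h3 : ((PV d π).filter (fun j => ppos π j + 1 = ppos π (partner d j))).card =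
    (PR d π).card := rfl
  omega

open Classical in
theorem card_QV (d : ℕ) (π : Equiv.Perm (Fin (2 * d))) :
    (QV d π).card = 2 * (QR d π).card := by
  have h := Finset.card_filter_add_card_filter_not (s := QV d π)
    (fun j => ppos π (prevVal d j) + 1 = ppos π j)
  have h2 : ((QV d π).filter (fun j => ¬ (ppos π (prevVal d j) + 1 = ppos π j))).card =
      (QR d π).card := by
    apply Finset.card_bij (fun j _ => prevVal d j)
    · intro j hj
      rw [Finset.mem_filter] at hj
      rw [QR, Finset.mem_filter, prev_mem_QV, prev_prev]
      refine ⟨hj.1, ?_⟩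
      exact (mem_QV.1 hj.1).1.resolve_right hj.2
    · intro a _ b _ e
      have := congrArg (prevVal d) e
      rwa [prev_prev, prev_prev] at this
    · intro b hb
      rw [QR, Finset.mem_filter] at hb
      refine ⟨prevVal d b, ?_, prev_prev d b⟩
      rw [Finset.mem_filter, prev_mem_QV, prev_prev]
      exact ⟨hb.1, by omega⟩
  have h3 : ((QV d π).filter (fun j => ppos π (prevVal d j) + 1 = ppos π j)).card =
    (QR d π).card := rfl
  omega

theorem mem_PR {d : ℕ} {π : Equiv.Perm (Fin (2 * d))} {j : Fin (2 * d)} :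
    j ∈ PR d π ↔ ppos π j + 1 = ppos π (partner d j) := by
  rw [PR, Finset.mem_filter, mem_PV]
  exact ⟨fun h => h.2, fun h => ⟨Or.inl h, h⟩⟩

theorem mem_QR {d : ℕ} {π : Equiv.Perm (Fin (2 * d))} {j : Fin (2 * d)} :
    j ∈ QR d π ↔ ppos π (prevVal d j) + 1 = ppos π j ∧ j ∈ PV d π ∧ prevVal d j ∈ PV d π := by
  rw [QR, Finset.mem_filter, mem_QV]
  exact ⟨fun h => ⟨h.2, h.1.2⟩, fun h => ⟨⟨Or.inr h.1, h.2⟩, h.1⟩⟩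

theorem QR_sub {d : ℕ} (hd : 2 ≤ d) (π : Equiv.Perm (Fin (2 * d))) : QR d π ⊆ PR d π := by
  intro j hj
  rw [mem_QR, mem_PV] at hj
  rw [mem_PR]
  obtain ⟨h1, h2, -⟩ := hj
  refine h2.resolve_right ?_
  intro h
  exact partner_ne_prev hd j (ppos_inj (π := π) (by omega))

theorem mem_classOf {d : ℕ} {π : Equiv.Perm (Fin (2 * d))} {j j' : Fin (2 * d)} :
    j' ∈ classOf d π j ↔ ApproxSim d π j j' := by simp [classOf]

theorem classOf_eq {d : ℕ} {π : Equiv.Perm (Fin (2 * d))} {a b : Fin (2 * d)}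
    (h1 : ¬ OneClass (2 * d) π) (ha : a ∈ PV d π) (hb : b ∈ PV d π) (h : Sim (2 * d) π a b) :
    classOf d π a = classOf d π b := by
  ext x
  rw [mem_classOf, mem_classOf, approx_iff h1, approx_iff h1]
  constructor
  · rintro (rfl | ⟨h2, -, h3⟩)
    · exact Or.inr ⟨sim_symm h, hb, ha⟩
    · exact Or.inr ⟨sim_trans (sim_symm h) h2, hb, h3⟩
  · rintro (rfl | ⟨h2, -, h3⟩)
    · exact Or.inr ⟨h, ha, hb⟩
    · exact Or.inr ⟨sim_trans h h2, ha, h3⟩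

/-- a start of a block cannot be strictly right of another start in the same run -/
theorem start_aux {d : ℕ} (hd : 2 ≤ d) {π : Equiv.Perm (Fin (2 * d))} {a b : Fin (2 * d)}
    (ha : a ∈ PR d π) (hb : b ∈ PR d π) (hb' : b ∉ QR d π)
    (h : Sim (2 * d) π a b) (hlt : ppos π a < ppos π b) : False := by
  rw [mem_PR] at ha hb
  have hB := ppos_lt π b
  have hadj : ∀ u v, ppos π a ≤ ppos π u → ppos π u + 1 = ppos π v → ppos π v ≤ ppos π b →
      Cyc d u v := by
    intro u v h1 h2 h3
    refine (posAdj_iff h2).1 (h _ (le_trans (min_le_left _ _) h1) (lt_of_lt_of_le ?_ (le_max_right _ _)))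
    change ppos π u < ppos π b
    omega
  obtain ⟨c, hc⟩ := ppos_surj π (show ppos π b - 1 < 2 * d by omega)
  have hcb : c = prevVal d b := by
    rcases (hadj c b (by omega) (by omega) le_rfl).symm' with e | e
    · rw [← e] at hb; omega
    · exact e
  have hne : ppos π a ≠ ppos π c := by
    intro e
    have := ppos_inj e
    rw [this] at ha
    have h2 : partner d c = b := ppos_inj (π := π) (by omega)
    rw [← h2, partner_partner] at hb; omega
  obtain ⟨e, he⟩ := ppos_surj π (show ppos π b - 2 < 2 * d by omega)
  have hec : e = partner d c := by
    rcases (hadj e c (by omega) (by omega) (by omega)).symm' with h2 | h2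
    · exact h2
    · rw [hcb, prev_prev] at h2
      rw [h2] at he; omega
  apply hb'
  rw [mem_QR, mem_PV, mem_PV, ← hcb, ← hec]
  refine ⟨by omega, Or.inl hb, Or.inr (by omega)⟩

theorem numBlocks_eq {d : ℕ} (hd : 2 ≤ d) {π : Equiv.Perm (Fin (2 * d))}
    (h1 : ¬ OneClass (2 * d) π) :
    numBlocks d π + (QR d π).card = (PR d π).card := by
  have hc := Finset.card_sdiff_add_card_eq_card (QR_sub hd π)
  rw [← hc]
  congr 1
  unfold numBlocks
  symm
  have sub : ∀ {j}, j ∈ PR d π → j ∈ PV d π := fun {j} hj => (Finset.mem_filter.1 hj).1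
  apply Finset.card_bij (fun j _ => classOf d π j)
  · intro j hj
    rw [Finset.mem_sdiff] at hj
    have hj' := sub hj.1
    rw [Finset.mem_filter]
    refine ⟨Finset.mem_image_of_mem _ (Finset.mem_univ _), ?_⟩
    rw [Finset.one_lt_card]
    refine ⟨j, ?_, partner d j, ?_, (partner_ne d j).symm⟩
    · rw [mem_classOf]; exact Or.inl rfl
    · rw [mem_classOf, approx_iff h1]
      exact Or.inr ⟨sim_of_adj (mem_PV.1 hj') (Or.inl rfl), hj', partner_mem_PV.2 hj'⟩
  · intro a ha b hb e
    rw [Finset.mem_sdiff] at ha hb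
    have : b ∈ classOf d π a := by
      rw [e, mem_classOf]; exact Or.inl rfl
    rw [mem_classOf, approx_iff h1] at this
    rcases this with h | ⟨h, -, -⟩
    · exact h
    · rcases lt_trichotomy (ppos π a) (ppos π b) with hl | hl | hl
      · exact (start_aux hd ha.1 hb.1 hb.2 h hl).elim
      · exact ppos_inj hl
      · exact (start_aux hd hb.1 ha.1 ha.2 (sim_symm h) hl).elim
  · intro C hC
    rw [Finset.mem_filter, Finset.mem_image] at hC
    obtain ⟨⟨c, -, rfl⟩, hcard⟩ := hC
    have hcP : c ∈ PV d π := by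
      by_contra hn
      rw [Finset.one_lt_card] at hcard
      obtain ⟨x, hx, y, hy, hxy⟩ := hcard
      rw [mem_classOf, approx_iff h1] at hx hy
      apply hxy
      rw [← hx.resolve_right (fun h => hn h.2.1), ← hy.resolve_right (fun h => hn h.2.1)]
    obtain ⟨x, hx, hmin⟩ := Finset.exists_min_image (classOf d π c) (ppos π)
      ⟨c, mem_classOf.2 (Or.inl rfl)⟩
    have hx2 : Sim (2 * d) π c x ∧ x ∈ PV d π := by
      rw [mem_classOf, approx_iff h1] at hx
      rcases hx with rfl | h
      · exact ⟨fun i h1 h2 => by omega, hcP⟩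
      · exact ⟨h.1, h.2.2⟩
    have hm : ∀ y, y ∈ PV d π → Sim (2 * d) π x y → ppos π x ≤ ppos π y := by
      intro y hy hs
      apply hmin
      rw [mem_classOf, approx_iff h1]
      exact Or.inr ⟨sim_trans hx2.1 hs, hcP, hy⟩
    refine ⟨x, ?_, (classOf_eq h1 hcP hx2.2 hx2.1).symm⟩
    rw [Finset.mem_sdiff, mem_PR, mem_QR]
    have hxp := mem_PV.1 hx2.2
    constructor
    · have := hm _ (partner_mem_PV.2 hx2.2) (sim_of_adj hxp (Or.inl rfl))
      rcases hxp with h | h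
      · exact h
      · omega
    · rintro ⟨h2, -, h3⟩
      have := hm _ h3 (sim_of_adj (Or.inr h2) (Or.inr rfl))
      omega

theorem nu_eq {d : ℕ} (hd : 2 ≤ d) {π : Equiv.Perm (Fin (2 * d))}
    (h1 : ¬ OneClass (2 * d) π) : nu d π = nu' d π := by
  have a := numBlocks_eq hd h1
  have b := numSingletons_eq h1
  have c := card_PV d π
  have e := card_QV d π
  unfold nu nu'
  have a' : (numBlocks d π : ℚ) + (QR d π).card = (PR d π).card := by exact_mod_cast a
  have b' : (numSingletons d π : ℚ) + (PV d π).card = 2 * d := by exact_mod_cast b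
  have c' : ((PV d π).card : ℚ) = 2 * (PR d π).card := by exact_mod_cast c
  have e' : ((QV d π).card : ℚ) = 2 * (QR d π).card := by exact_mod_cast e
  linarith

theorem nu_le {d : ℕ} (hd : 2 ≤ d) (π : Equiv.Perm (Fin (2 * d))) : nu d π ≤ nu' d π := by
  by_cases h : OneClass (2 * d) π
  · exact (nu_le_two_of_one h).trans (two_le_nu' hd π)
  · exact (nu_eq hd h).le

end counting

section core

theorem mono_sets {d : ℕ} {π τ : Equiv.Perm (Fin (2 * d))}
    (hP : ∀ u, u ∈ PV d π → PAdj τ u (partner d u))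
    (hQ : ∀ u, u ∈ QV d π → PAdj τ u (prevVal d u)) :
    PV d π ⊆ PV d τ ∧ QV d π ⊆ QV d τ := by
  have h1 : PV d π ⊆ PV d τ := fun u hu => mem_PV.2 (hP u hu)
  refine ⟨h1, fun u hu => ?_⟩
  have h := mem_QV.1 hu
  exact mem_QV.2 ⟨hQ u hu, h1 h.2.1, h1 h.2.2⟩

theorem card_add_two {α : Type*} [DecidableEq α] {A B : Finset α} (h : A ⊆ B) {x y : α}
    (hxy : x ≠ y) (hx : x ∉ A) (hy : y ∉ A) (hx' : x ∈ B) (hy' : y ∈ B) :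
    A.card + 2 ≤ B.card := by
  have hs : insert x (insert y A) ⊆ B := by
    intro z hz
    simp only [Finset.mem_insert] at hz
    rcases hz with rfl | rfl | hz
    · exact hx'
    · exact hy'
    · exact h hz
  have := Finset.card_le_card hs
  rw [Finset.card_insert_of_notMem (by simp [hxy, hx]), Finset.card_insert_of_notMem hy] at this
  omega

set_option maxHeartbeats 2000000 in
theorem core {d : ℕ} (hd : 2 ≤ d) (π : Equiv.Perm (Fin (2 * d)))
    (h1 : ¬ OneClass (2 * d) π) :
    ∃ (τ : Equiv.Perm (Fin (2 * d))) (n : ℕ), 0 < n ∧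
      (∃ w : (prefixSuffixGraph (2 * d)).Walk π τ, w.length ≤ n) ∧ nu' d τ + n ≤ nu' d π := by
  obtain ⟨a, ha⟩ := ppos_surj π (show 0 < 2 * d by omega)
  by_cases haP : a ∈ PV d π
  swap
  · -- the first element is free
    obtain ⟨τ, hτ, hpos⟩ := exists_prefix π (ppos π (partner d a)) (ppos_lt π _).le
    have hpa : partner d a ∉ PV d π := by rwa [partner_mem_PV]
    have hpne : ppos π (partner d a) ≠ 0 := fun h => partner_ne d a (ppos_inj (π := π) (by omega))
    have hne : ∀ u, u ∈ PV d π → ppos π u ≠ ppos π (partner d a) := by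
      intro u hu e
      exact hpa (ppos_inj e ▸ hu)
    have keep : ∀ u v, u ∈ PV d π → v ∈ PV d π → PAdj π u v → PAdj τ u v := by
      intro u v hu hv huv
      have := hne u hu
      have := hne v hv
      unfold PAdj at *
      rw [hpos, hpos]
      split_ifs <;> omega
    obtain ⟨mP, mQ⟩ := mono_sets (τ := τ) (π := π)
      (fun u hu => keep _ _ hu (partner_mem_PV.2 hu) (mem_PV.1 hu))
      (fun u hu => keep _ _ (mem_QV.1 hu).2.1 (mem_QV.1 hu).2.2 (mem_QV.1 hu).1)
    have hnew : a ∈ PV d τ := by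
      rw [mem_PV]
      unfold PAdj
      rw [hpos, hpos]
      split_ifs <;> omega
    have c1 := card_add_two mP (partner_ne d a).symm haP hpa hnew (partner_mem_PV.2 hnew)
    have c2 := Finset.card_le_card mQ
    refine ⟨τ, 1, by omega, walk_of_step (Or.inl hτ), ?_⟩
    have c1' : ((PV d π).card : ℚ) + 2 ≤ (PV d τ).card := by exact_mod_cast c1
    have c2' : ((QV d π).card : ℚ) ≤ (QV d τ).card := by exact_mod_cast c2
    unfold nu'
    push_cast
    linarith
  have hφ : ppos π (partner d a) = 1 := by
    have := mem_PV.1 haP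
    unfold PAdj at this
    omega
  obtain ⟨b, hb⟩ : ∃ b, b = prevVal d a := ⟨_, rfl⟩
  have hba : prevVal d b = a := by rw [hb, prev_prev]
  have hb0 : ppos π b ≠ 0 := fun h => prev_ne d a (hb ▸ ppos_inj (π := π) (by omega))
  have hb1 : ppos π b ≠ 1 := fun h => partner_ne_prev hd a (hb ▸ ppos_inj (π := π) (by omega))
  have hblt := ppos_lt π b
  have haQ : a ∉ QV d π := by
    intro h
    have := (mem_QV.1 h).1
    unfold PAdj at this
    rw [← hb] at this
    omega
  have hbQ : b ∉ QV d π := by rwa [hb, prev_mem_QV]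
  have hab : a ≠ b := by rintro rfl; omega
  by_cases hbP : b ∈ PV d π
  · -- general conclusion for this case
    have fin2 : ∀ (τ : Equiv.Perm (Fin (2 * d))),
        (∀ u, u ∈ PV d π → PAdj τ u (partner d u)) →
        (∀ u, u ∈ QV d π → PAdj τ u (prevVal d u)) → PAdj τ a b →
        nu' d τ + 2 ≤ nu' d π := by
      intro τ hP hQ hnew
      obtain ⟨mP, mQ⟩ := mono_sets hP hQ
      have hnew' : a ∈ QV d τ := mem_QV.2 ⟨hb ▸ hnew, mP haP, hb ▸ mP hbP⟩
      have c1 := card_add_two mQ hab haQ hbQ hnew' (hb ▸ prev_mem_QV.2 hnew')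
      have c2 := Finset.card_le_card mP
      have c1' : ((QV d π).card : ℚ) + 2 ≤ (QV d τ).card := by exact_mod_cast c1
      have c2' : ((PV d π).card : ℚ) ≤ (PV d τ).card := by exact_mod_cast c2
      unfold nu'
      linarith
    -- b is not involved in good prev-links
    have hQne : ∀ u, u ∈ QV d π → ppos π u ≠ ppos π b ∧ ppos π (prevVal d u) ≠ ppos π b := by
      intro u hu
      constructor
      · intro e; exact hbQ (ppos_inj e ▸ hu)
      · intro e; exact hbQ (ppos_inj e ▸ prev_mem_QV.2 hu)
    rcases mem_PV.1 hbP with hr | hl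
    · -- partner of b on the right of b
      obtain ⟨τ, hτ, hpos⟩ := exists_prefix π (ppos π b) (ppos_lt π _).le
      refine ⟨τ, 1, by omega, walk_of_step (Or.inl hτ), ?_⟩
      have : nu' d τ + 2 ≤ nu' d π := by
        apply fin2
        · intro u hu
          have hu' := mem_PV.1 hu
          have e1 : ppos π u = ppos π b → ppos π (partner d u) = ppos π (partner d b) := by
            intro e; rw [ppos_inj e]
          have e2 : ppos π (partner d u) = ppos π b → ppos π u = ppos π (partner d b) := by
            intro e; rw [← ppos_inj e, partner_partner]
          unfold PAdj at *
          rw [hpos, hpos]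
          split_ifs <;> omega
        · intro u hu
          have hu' := (mem_QV.1 hu).1
          have := hQne u hu
          unfold PAdj at *
          rw [hpos, hpos]
          split_ifs <;> omega
        · unfold PAdj
          rw [hpos, hpos]
          split_ifs <;> omega
      push_cast
      linarith
    · -- partner of b on the left of b
      obtain ⟨x, y, hxy, hyb, hgood⟩ : ∃ x y, ppos π x + 1 = ppos π y ∧ ppos π y ≤ ppos π b ∧
          ¬ ((y = partner d x ∧ x ∈ PV d π) ∨ (y = prevVal d x ∧ x ∈ QV d π)) := by
        by_contra hcon
        push Not at hcon
        have hs : Sim (2 * d) π a b := by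
          intro i _ h3
          change i < max (ppos π a) (ppos π b) at h3
          obtain ⟨x, hx⟩ := ppos_surj π (show i < 2 * d by omega)
          obtain ⟨y, hy⟩ := ppos_surj π (show i + 1 < 2 * d by omega)
          rw [← hx]
          rw [posAdj_iff (show ppos π x + 1 = ppos π y by omega)]
          by_contra hcyc
          apply hcyc
          have := hcon x y (by omega) (by omega)
          unfold Cyc
          tauto
        rcases adj_or_one hs (Or.inr hb) with h | h
        · unfold PAdj at h; omega
        · exact h1 h
      have hylt := ppos_lt π y
      have hP1 : ∀ u, u ∈ PV d π → ¬ (ppos π u = ppos π x ∧ ppos π (partner d u) = ppos π y) := by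
        rintro u hu ⟨e1, e2⟩
        have e1 := ppos_inj e1
        have e2 := ppos_inj e2
        subst e1
        exact hgood (Or.inl ⟨e2.symm, hu⟩)
      have hP2 : ∀ u, u ∈ PV d π → ¬ (ppos π u = ppos π y ∧ ppos π (partner d u) = ppos π x) := by
        rintro u hu ⟨e1, e2⟩
        refine hP1 (partner d u) (partner_mem_PV.2 hu) ⟨e2, ?_⟩
        rw [partner_partner]; exact e1
      have hQ1 : ∀ u, u ∈ QV d π → ¬ (ppos π u = ppos π x ∧ ppos π (prevVal d u) = ppos π y) := by
        rintro u hu ⟨e1, e2⟩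
        have e1 := ppos_inj e1
        have e2 := ppos_inj e2
        subst e1
        exact hgood (Or.inr ⟨e2.symm, hu⟩)
      have hQ2 : ∀ u, u ∈ QV d π → ¬ (ppos π u = ppos π y ∧ ppos π (prevVal d u) = ppos π x) := by
        rintro u hu ⟨e1, e2⟩
        refine hQ1 (prevVal d u) (prev_mem_QV.2 hu) ⟨e2, ?_⟩
        rw [prev_prev]; exact e1
      have hyb' : ppos π y ≠ ppos π b := by
        intro e
        exact hP2 b hbP ⟨e.symm, by omega⟩
      have hx0 : ppos π x ≠ 0 := by
        intro e
        exact hP1 a haP ⟨by omega, by omega⟩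
      obtain ⟨σ, hσ, hpσ⟩ := exists_suffix π (ppos π y) (ppos_lt π _).le
      obtain ⟨τ, hτ, hpτ⟩ := exists_prefix σ (ppos σ b) (ppos_lt σ _).le
      obtain ⟨w1, hw1⟩ := walk_of_step (Or.inr hσ)
      obtain ⟨w2, hw2⟩ := walk_of_step (Or.inl hτ)
      refine ⟨τ, 2, by omega, ⟨w1.append w2, by rw [SimpleGraph.Walk.length_append]; omega⟩, ?_⟩
      have hσb : ppos σ b = 2 * d - 1 - ppos π b + ppos π y := by
        rw [hpσ]; split_ifs <;> omega
      have : nu' d τ + 2 ≤ nu' d π := by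
        apply fin2
        · intro u hu
          have hu' := mem_PV.1 hu
          have e1 : ppos π u = ppos π b → ppos π (partner d u) = ppos π (partner d b) := by
            intro e; rw [ppos_inj e]
          have e2 : ppos π (partner d u) = ppos π b → ppos π u = ppos π (partner d b) := by
            intro e; rw [← ppos_inj e, partner_partner]
          have := hP1 u hu
          have := hP2 u hu
          have := ppos_lt π u
          have := ppos_lt π (partner d u)
          have s1 : PAdj σ u (partner d u) := by
            unfold PAdj at *
            rw [hpσ, hpσ]
            split_ifs <;> omega
          have k1 := hpσ u
          have k2 := hpσ (partner d u)
          unfold PAdj at *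
          rw [hpτ, hpτ]
          split_ifs at k1 k2 ⊢ <;> omega
        · intro u hu
          have hu' := (mem_QV.1 hu).1
          have := hQne u hu
          have := hQ1 u hu
          have := hQ2 u hu
          have := ppos_lt π u
          have := ppos_lt π (prevVal d u)
          have s1 : PAdj σ u (prevVal d u) := by
            unfold PAdj at *
            rw [hpσ, hpσ]
            split_ifs <;> omega
          have k1 := hpσ u
          have k2 := hpσ (prevVal d u)
          unfold PAdj at *
          rw [hpτ, hpτ]
          split_ifs at k1 k2 ⊢ <;> omega
        · have k1 := hpσ a
          unfold PAdj
          rw [hpτ, hpτ]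
          split_ifs at k1 ⊢ <;> omega
      push_cast
      linarith
  · -- b is free
    obtain ⟨c, hc⟩ : ∃ c, c = partner d b := ⟨_, rfl⟩
    have hcP : c ∉ PV d π := by rwa [hc, partner_mem_PV]
    have hcb : c ≠ b := hc ▸ partner_ne d b
    have hca : c ≠ a := by rintro rfl; exact hcP haP
    have nb : ∀ u, u ∈ PV d π → ppos π u ≠ ppos π b := fun u hu e => hbP (ppos_inj e ▸ hu)
    have nc : ∀ u, u ∈ PV d π → ppos π u ≠ ppos π c := fun u hu e => hcP (ppos_inj e ▸ hu)
    have hcb' : ppos π c ≠ ppos π b := fun e => hcb (ppos_inj e)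
    have hca' : ppos π c ≠ 0 := fun e => hca (ppos_inj (π := π) (by omega))
    have hclt := ppos_lt π c
    obtain ⟨σ, hσ, hpσ⟩ := exists_prefix π (ppos π b) (ppos_lt π _).le
    obtain ⟨ρ, hρ, hpρ⟩ := exists_prefix σ (ppos π b + 1) (ppos_lt π _)
    have hpρ' : ∀ u, ppos ρ u = if ppos π u < ppos π b then ppos π u + 1 else
        if ppos π u = ppos π b then 0 else ppos π u := by
      intro u
      have := hpσ u
      rw [hpρ]
      split_ifs at this ⊢ <;> omega
    obtain ⟨τ, hτ, hpτ⟩ := exists_prefix ρ (ppos ρ c) (ppos_lt ρ _).le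
    have kc := hpρ' c
    have ka := hpρ' a
    have kb := hpρ' b
    obtain ⟨w1, hw1⟩ := walk_of_step (Or.inl hσ)
    obtain ⟨w2, hw2⟩ := walk_of_step (Or.inl hρ)
    obtain ⟨w3, hw3⟩ := walk_of_step (Or.inl hτ)
    refine ⟨τ, 3, by omega, ⟨(w1.append w2).append w3, by
      rw [SimpleGraph.Walk.length_append, SimpleGraph.Walk.length_append]; omega⟩, ?_⟩
    have keep : ∀ u v, u ∈ PV d π → v ∈ PV d π → PAdj π u v → PAdj τ u v := by
      intro u v hu hv huv
      have := nb u hu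
      have := nb v hv
      have := nc u hu
      have := nc v hv
      have ku := hpρ' u
      have kv := hpρ' v
      unfold PAdj at *
      rw [hpτ, hpτ]
      split_ifs at ku kv kc ⊢ <;> omega
    obtain ⟨mP, mQ⟩ := mono_sets (τ := τ) (π := π)
      (fun u hu => keep _ _ hu (partner_mem_PV.2 hu) (mem_PV.1 hu))
      (fun u hu => keep _ _ (mem_QV.1 hu).2.1 (mem_QV.1 hu).2.2 (mem_QV.1 hu).1)
    have nbc : PAdj τ b c := by
      unfold PAdj
      rw [hpτ, hpτ]
      split_ifs at kb kc ⊢ <;> omega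
    have nab : PAdj τ a b := by
      unfold PAdj
      rw [hpτ, hpτ]
      split_ifs at ka kb kc ⊢ <;> omega
    have hbn : b ∈ PV d τ := mem_PV.2 (hc ▸ nbc)
    have han : a ∈ QV d τ := mem_QV.2 ⟨hb ▸ nab, mP haP, hb ▸ hbn⟩
    have c1 := card_add_two mP hcb.symm hbP hcP hbn (hc ▸ partner_mem_PV.2 hbn)
    have c2 := card_add_two mQ hab haQ hbQ han (hb ▸ prev_mem_QV.2 han)
    have c1' : ((PV d π).card : ℚ) + 2 ≤ (PV d τ).card := by exact_mod_cast c1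
    have c2' : ((QV d π).card : ℚ) + 2 ≤ (QV d τ).card := by exact_mod_cast c2
    unfold nu'
    push_cast
    linarith

end core

/-- Let `k = 2d` with `d ≥ 1`. For every `π ∈ S_k` with `ν(π) > 2`,
there exists `τ ∈ S_k` with `0 < d_{G_k}(π, τ) ≤ ν(π) - ν(τ)`. -/
theorem statement_5 (d : ℕ) (hd : 1 ≤ d) (π : Equiv.Perm (Fin (2 * d)))
    (hν : 2 < nu d π) :
    ∃ τ : Equiv.Perm (Fin (2 * d)),
      0 < (prefixSuffixGraph (2 * d)).dist π τ ∧
      ((prefixSuffixGraph (2 * d)).dist π τ : ℚ) ≤ nu d π - nu d τ := by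
  have h1 : ¬ OneClass (2 * d) π := fun h => absurd (nu_le_two_of_one h) (not_le.2 hν)
  have hd2 : 2 ≤ d := by
    by_contra hlt
    have : d = 1 := by omega
    subst this
    apply h1
    intro a b i h2 h3
    have := (π.symm a).isLt
    have := (π.symm b).isLt
    refine ⟨by omega, ?_⟩
    left
    have hA := (π ⟨i, by omega⟩).isLt
    have hB := (π ⟨i + 1, by omega⟩).isLt
    have hne : (π ⟨i, by omega⟩ : ℕ) ≠ (π ⟨i + 1, by omega⟩ : ℕ) := by
      intro e
      have := congrArg Fin.val (π.injective (Fin.ext e))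
      simp at this
    omega
  obtain ⟨τ, n, hn, ⟨w, hw⟩, hle⟩ := core hd2 π h1
  have hn' : (1 : ℚ) ≤ n := by exact_mod_cast hn
  have hne : π ≠ τ := by
    rintro rfl
    linarith
  refine ⟨τ, w.reachable.pos_dist_of_ne hne, ?_⟩
  have h2 : ((prefixSuffixGraph (2 * d)).dist π τ : ℚ) ≤ n := by
    exact_mod_cast (SimpleGraph.dist_le w).trans hw
  have h3 := nu_eq hd2 h1
  have h4 := nu_le hd2 τ
  linarith
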